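/- arXiv:2508.06285 — 13 statements merged into one kernel-verified Lean document; each statement's English description precedes it below -/
import Mathlib

section
/- For any (possibly degenerate) triangle with side lengths a, b, c and area S, the Finsler–Hadwiger inequality holds: a² + b² + c² ≥ (a−b)² + (b−c)² + (c−a)² + 4√3·S. -/
/-- Finsler–Hadwiger inequality: for any (possibly degenerate) triangle with
side lengths `a, b, c` and Heron area `S`, we have
`a² + b² + c² ≥ (a−b)² + (b−c)² + (c−a)² + 4√3·S`. -/
theorem finsler_hadwiger (a b c S : ℝ)
    (ha : 0 ≤ a) (hb : 0 ≤ b) (hc : 0 ≤ c)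
    (hab : a ≤ b + c) (hbc : b ≤ c + a) (hca : c ≤ a + b)
    (hS : 0 ≤ S)
    (heron : 16 * S ^ 2 = (a + b + c) * (-a + b + c) * (a - b + c) * (a + b - c)) :
    a ^ 2 + b ^ 2 + c ^ 2 ≥
      (a - b) ^ 2 + (b - c) ^ 2 + (c - a) ^ 2 + 4 * Real.sqrt 3 * S := by
  obtain ⟨x, hx⟩ : ∃ x, x = -a + b + c := ⟨_, rfl⟩
  obtain ⟨y, hy⟩ : ∃ y, y = a - b + c := ⟨_, rfl⟩
  obtain ⟨z, hz⟩ : ∃ z, z = a + b - c := ⟨_, rfl⟩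
  have hx0 : 0 ≤ x := by linarith
  have hy0 : 0 ≤ y := by linarith
  have hz0 : 0 ≤ z := by linarith
  have hsum : a + b + c = x + y + z := by linarith
  rw [← hx, ← hy, ← hz, hsum] at heron
  have hP : 0 ≤ x * y + y * z + z * x := by positivity
  have h3 : Real.sqrt 3 ^ 2 = 3 := Real.sq_sqrt (by norm_num)
  have hsq : (4 * Real.sqrt 3 * S) ^ 2 ≤ (x * y + y * z + z * x) ^ 2 := by
    have e : (4 * Real.sqrt 3 * S) ^ 2 = 3 * ((x + y + z) * x * y * z) := by
      rw [mul_pow, mul_pow, h3, ← heron]; ring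
    rw [e]
    nlinarith [sq_nonneg (x * y - y * z), sq_nonneg (y * z - z * x), sq_nonneg (z * x - x * y)]
  have hle := abs_le_of_sq_le_sq' hsq hP
  have key : a ^ 2 + b ^ 2 + c ^ 2 - ((a - b) ^ 2 + (b - c) ^ 2 + (c - a) ^ 2)
      = x * y + y * z + z * x := by rw [hx, hy, hz]; ring
  linarith [hle.2]
end

section
/- For any (possibly degenerate) triangle with side lengths a, b, c and area S, the reverse Finsler–Hadwiger inequality holds: a² + b² + c² ≤ 3[(a−b)² + (b−c)² + (c−a)²] + 4√3·S. -/
lemma schur_ordered (x y z : ℝ) (hz : 0 ≤ z) (hyz : z ≤ y) (hxy : y ≤ x) :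
    (4 * (x*y+y*z+z*x) - (x+y+z)^2) * (x+y+z) ≤ 9 * (x*y*z) := by
  have h1 : 0 ≤ x - y := by linarith
  have h2 : 0 ≤ y - z := by linarith
  have h3 : 0 ≤ (x - y)^2 * (x + y - z) := mul_nonneg (sq_nonneg _) (by linarith)
  have h4 : 0 ≤ z * ((x - z) * (y - z)) :=
    mul_nonneg hz (mul_nonneg (by linarith) h2)
  nlinarith [h3, h4]

lemma schur_deg_one (x y z : ℝ) (hx : 0 ≤ x) (hy : 0 ≤ y) (hz : 0 ≤ z) :
    (4 * (x*y+y*z+z*x) - (x+y+z)^2) * (x+y+z) ≤ 9 * (x*y*z) := by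
  rcases le_total x y with h1 | h1 <;> rcases le_total y z with h2 | h2 <;>
    rcases le_total x z with h3 | h3
  · linarith [schur_ordered z y x hx h1 h2]
  · linarith [schur_ordered z y x hx h1 h2]
  · linarith [schur_ordered y z x hx h3 h2]
  · linarith [schur_ordered y x z hz h3 h1]
  · linarith [schur_ordered z x y hy h1 h3]
  · linarith [schur_ordered x z y hy h2 h3]
  · linarith [schur_ordered x y z hz h2 h1]
  · linarith [schur_ordered x y z hz h2 h1]

lemma amgm_three (x y z : ℝ) (hx : 0 ≤ x) (hy : 0 ≤ y) (hz : 0 ≤ z) :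
    27 * (x*y*z) ≤ (x+y+z)^3 := by
  nlinarith [mul_nonneg hx (sq_nonneg (y - z)), mul_nonneg hy (sq_nonneg (x - z)),
    mul_nonneg hz (sq_nonneg (x - y)), mul_nonneg hx (sq_nonneg (x - y)),
    mul_nonneg hx (sq_nonneg (x - z)), mul_nonneg hy (sq_nonneg (y - x)),
    mul_nonneg hy (sq_nonneg (y - z)), mul_nonneg hz (sq_nonneg (z - x)),
    mul_nonneg hz (sq_nonneg (z - y))]

lemma key_bound (x y z T : ℝ) (hx : 0 ≤ x) (hy : 0 ≤ y) (hz : 0 ≤ z) (hT : 0 ≤ T)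
    (h : T^2 = 3 * (x+y+z) * (x*y*z)) :
    4 * (x*y+y*z+z*x) - (x+y+z)^2 ≤ T := by
  have hs := schur_deg_one x y z hx hy hz
  have ham := amgm_three x y z hx hy hz
  have hr : 0 ≤ x*y*z := by positivity
  rcases (show 0 ≤ x+y+z by positivity).eq_or_lt with hp | hp
  · have h1 : x = 0 := by linarith
    have h2 : y = 0 := by linarith
    have h3 : z = 0 := by linarith
    subst h1 h2 h3
    simpa using hT
  · have h9 : 9 * (x*y*z) ≤ T * (x+y+z) := by
      apply abs_le_of_sq_le_sq' _ (by positivity) |>.2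
      have := mul_le_mul_of_nonneg_left ham hr
      rw [mul_pow T, h]
      nlinarith [this]
    exact le_of_mul_le_mul_right (hs.trans h9) hp

/-- Reverse Finsler–Hadwiger inequality: for any (possibly degenerate) triangle with
side lengths `a, b, c` and Heron area `S`, we have
`a² + b² + c² ≤ 3[(a−b)² + (b−c)² + (c−a)²] + 4√3·S`. -/
theorem reverse_finsler_hadwiger (a b c S : ℝ)
    (ha : 0 ≤ a) (hb : 0 ≤ b) (hc : 0 ≤ c)
    (hab : a ≤ b + c) (hbc : b ≤ c + a) (hca : c ≤ a + b)
    (hS : 0 ≤ S)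
    (heron : 16 * S ^ 2 = (a + b + c) * (-a + b + c) * (a - b + c) * (a + b - c)) :
    a ^ 2 + b ^ 2 + c ^ 2 ≤
      3 * ((a - b) ^ 2 + (b - c) ^ 2 + (c - a) ^ 2) + 4 * Real.sqrt 3 * S := by
  have h := key_bound ((b+c-a)/2) ((c+a-b)/2) ((a+b-c)/2) (Real.sqrt 3 * S)
    (by linarith) (by linarith) (by linarith) (by positivity)
    (by
      rw [mul_pow, Real.sq_sqrt (by norm_num)]
      linear_combination (3/16) * heron)
  nlinarith [h]
end

section
/- Equality holds in the Finsler–Hadwiger inequality a² + b² + c² ≥ (a−b)² + (b−c)² + (c−a)² + 4√3·S if and only if the triangle is equilateral (a = b = c) or degenerate with one side of length zero and the other two equal (up to permutation, c = 0 and a = b). -/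
/-- Equality case in the Finsler–Hadwiger inequality: for a (possibly degenerate)
triangle with sides `a, b, c` not all zero and Heron area `S`, equality
`a² + b² + c² = (a−b)² + (b−c)² + (c−a)² + 4√3·S` holds iff the triangle is
equilateral or degenerate with one side zero and the other two equal. -/
theorem finsler_hadwiger_equality (a b c S : ℝ)
    (ha : 0 ≤ a) (hb : 0 ≤ b) (hc : 0 ≤ c)
    (hab : a ≤ b + c) (hbc : b ≤ c + a) (hca : c ≤ a + b)
    (hne : ¬ (a = 0 ∧ b = 0 ∧ c = 0))
    (hS : 0 ≤ S)
    (heron : 16 * S ^ 2 = (a + b + c) * (-a + b + c) * (a - b + c) * (a + b - c)) :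
    a ^ 2 + b ^ 2 + c ^ 2 =
        (a - b) ^ 2 + (b - c) ^ 2 + (c - a) ^ 2 + 4 * Real.sqrt 3 * S ↔
      (a = b ∧ b = c) ∨ (a = 0 ∧ b = c) ∨ (b = 0 ∧ c = a) ∨ (c = 0 ∧ a = b) := by
  have h3 : Real.sqrt 3 ^ 2 = 3 := Real.sq_sqrt (by norm_num)
  have h3' : 0 ≤ Real.sqrt 3 := Real.sqrt_nonneg 3
  obtain ⟨x, hx⟩ : ∃ x, x = -a + b + c := ⟨_, rfl⟩
  obtain ⟨y, hy⟩ : ∃ y, y = a - b + c := ⟨_, rfl⟩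
  obtain ⟨z, hz⟩ : ∃ z, z = a + b - c := ⟨_, rfl⟩
  have hx0 : 0 ≤ x := by linarith
  have hy0 : 0 ≤ y := by linarith
  have hz0 : 0 ≤ z := by linarith
  have ea : a = (y + z) / 2 := by linarith
  have eb : b = (z + x) / 2 := by linarith
  have ec : c = (x + y) / 2 := by linarith
  have hH : 16 * S ^ 2 = (x + y + z) * x * y * z := by
    rw [heron, hx, hy, hz]; ring
  have hT : (4 * Real.sqrt 3 * S) ^ 2 = 3 * ((x + y + z) * x * y * z) := by
    rw [← hH, mul_pow, mul_pow, h3]; ring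
  have hT0 : 0 ≤ 4 * Real.sqrt 3 * S := by positivity
  have hQ0 : 0 ≤ x * y + y * z + z * x := by positivity
  have key : a ^ 2 + b ^ 2 + c ^ 2 =
        (a - b) ^ 2 + (b - c) ^ 2 + (c - a) ^ 2 + 4 * Real.sqrt 3 * S ↔
      x * y + y * z + z * x = 4 * Real.sqrt 3 * S := by
    have e : a ^ 2 + b ^ 2 + c ^ 2 - ((a - b) ^ 2 + (b - c) ^ 2 + (c - a) ^ 2)
        = x * y + y * z + z * x := by
      rw [hx, hy, hz]; ring
    constructor <;> intro h <;> linarith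
  rw [key]
  constructor
  · intro h
    have h2 : (x * y + y * z + z * x) ^ 2 = 3 * ((x + y + z) * x * y * z) := by
      rw [h, hT]
    have p1 : x * y - y * z = 0 := by
      apply pow_eq_zero_iff (two_ne_zero) |>.1
      nlinarith [sq_nonneg (x * y - y * z), sq_nonneg (y * z - z * x), sq_nonneg (z * x - x * y)]
    have p2 : y * z - z * x = 0 := by
      apply pow_eq_zero_iff (two_ne_zero) |>.1
      nlinarith [sq_nonneg (x * y - y * z), sq_nonneg (y * z - z * x), sq_nonneg (z * x - x * y)]
    have q1 : y * (x - z) = 0 := by linarith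
    have q2 : z * (y - x) = 0 := by linarith
    rcases mul_eq_zero.1 q1 with r1 | r1 <;> rcases mul_eq_zero.1 q2 with r2 | r2
    · exact Or.inr (Or.inl ⟨by linarith, by linarith⟩)
    · exact Or.inr (Or.inr (Or.inr ⟨by linarith, by linarith⟩))
    · exact Or.inr (Or.inr (Or.inl ⟨by linarith, by linarith⟩))
    · exact Or.inl ⟨by linarith, by linarith⟩
  · intro h
    apply (sq_eq_sq₀ hQ0 hT0).1
    rw [hT]
    rcases h with ⟨h1, h2⟩ | ⟨h1, h2⟩ | ⟨h1, h2⟩ | ⟨h1, h2⟩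
    · have u : x = z := by linarith
      have v : y = z := by linarith
      rw [u, v]; ring
    · have u : y = 0 := by linarith
      have v : z = 0 := by linarith
      rw [u, v]; ring
    · have u : x = 0 := by linarith
      have v : z = 0 := by linarith
      rw [u, v]; ring
    · have u : x = 0 := by linarith
      have v : y = 0 := by linarith
      rw [u, v]; ring
end

section
/- Equality holds in the reverse Finsler–Hadwiger inequality a² + b² + c² ≤ 3[(a−b)² + (b−c)² + (c−a)²] + 4√3·S if and only if the triangle is equilateral (a = b = c) or is a degenerate isosceles triangle in which one side equals the sum of the two others which are equal (up to permutation, b = c = a/2). -/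
theorem schur_aux (x y z : ℝ) (hx : 0 ≤ x) (hy : 0 ≤ y) (hz : 0 ≤ z) :
    0 ≤ x * (x - y) * (x - z) + y * (y - x) * (y - z) + z * (z - x) * (z - y) := by
  have key : ∀ u v w : ℝ, 0 ≤ w → w ≤ v → v ≤ u →
      0 ≤ u * (u - v) * (u - w) + v * (v - u) * (v - w) + w * (w - u) * (w - v) := by
    intro u v w hw hwv hvu
    have h1 : 0 ≤ (u - v) ^ 2 * (u + v - w) := mul_nonneg (sq_nonneg _) (by linarith)
    have h2 : 0 ≤ w * ((u - w) * (v - w)) :=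
      mul_nonneg hw (mul_nonneg (by linarith) (by linarith))
    linarith
  rcases le_total x y with h1 | h1 <;> rcases le_total y z with h2 | h2 <;>
    rcases le_total x z with h3 | h3
  · linarith [key z y x hx h1 h2]
  · linarith [key z y x hx h1 h2]
  · linarith [key y z x hx h3 h2]
  · linarith [key y x z hz h3 h1]
  · linarith [key z x y hy h1 h3]
  · linarith [key x z y hy h2 h3]
  · linarith [key x y z hz h2 h1]
  · linarith [key x y z hz h2 h1]

/-- Equality case in the reverse Finsler–Hadwiger inequality: for a (possibly
degenerate) triangle with sides `a, b, c` not all zero and Heron area `S`, equality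
`a² + b² + c² = 3[(a−b)² + (b−c)² + (c−a)²] + 4√3·S` holds iff the triangle is
equilateral or is a degenerate isosceles triangle in which one side equals the sum
of the two others which are equal. -/
theorem reverse_finsler_hadwiger_equality (a b c S : ℝ)
    (ha : 0 ≤ a) (hb : 0 ≤ b) (hc : 0 ≤ c)
    (hab : a ≤ b + c) (hbc : b ≤ c + a) (hca : c ≤ a + b)
    (hne : ¬ (a = 0 ∧ b = 0 ∧ c = 0))
    (hS : 0 ≤ S)
    (heron : 16 * S ^ 2 = (a + b + c) * (-a + b + c) * (a - b + c) * (a + b - c)) :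
    a ^ 2 + b ^ 2 + c ^ 2 =
        3 * ((a - b) ^ 2 + (b - c) ^ 2 + (c - a) ^ 2) + 4 * Real.sqrt 3 * S ↔
      (a = b ∧ b = c) ∨ (b = c ∧ b = a / 2) ∨ (c = a ∧ c = b / 2) ∨
        (a = b ∧ a = c / 2) := by
  have h3 : Real.sqrt 3 ^ 2 = 3 := Real.sq_sqrt (by norm_num)
  have h3p : 0 ≤ Real.sqrt 3 := Real.sqrt_nonneg 3
  constructor
  · intro h
    have hp : 0 < a + b + c := by
      by_contra hcon
      exact hne ⟨by linarith, by linarith, by linarith⟩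
    have hT : 0 ≤ 4 * Real.sqrt 3 * S := by positivity
    obtain ⟨T, hTd⟩ : ∃ T, T = 4 * Real.sqrt 3 * S := ⟨_, rfl⟩
    rw [← hTd] at h hT
    have hTT : T ^ 2 = 3 * ((a + b + c) * (-a + b + c) * (a - b + c) * (a + b - c)) := by
      rw [hTd, ← heron, mul_pow, mul_pow, h3]; ring
    have hT2 : T = a ^ 2 + b ^ 2 + c ^ 2 - 3 * ((a - b) ^ 2 + (b - c) ^ 2 + (c - a) ^ 2) := by
      linarith
    have hs := schur_aux (-a + b + c) (a - b + c) (a + b - c)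
      (by linarith) (by linarith) (by linarith)
    have hs2 : (a + b + c) * T ≤ 9 * ((-a + b + c) * (a - b + c) * (a + b - c)) := by
      rw [hT2]; linarith
    have hle : 3 * T ≤ (a + b + c) ^ 2 := by
      rw [hT2]; nlinarith [sq_nonneg (a - b), sq_nonneg (b - c), sq_nonneg (c - a)]
    have hmul := mul_le_mul_of_nonneg_left hs2 hp.le
    have hprod : T * ((a + b + c) ^ 2 - 3 * T) = 0 := by
      apply le_antisymm
      · linarith
      · exact mul_nonneg hT (by linarith)
    rcases mul_eq_zero.mp hprod with h0 | h0
    · rw [h0] at hTT hT2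
      have hr : (a + b + c) * (-a + b + c) * (a - b + c) * (a + b - c) = 0 := by linarith
      right
      rcases mul_eq_zero.mp hr with hr | hr
      · rcases mul_eq_zero.mp hr with hr | hr
        · rcases mul_eq_zero.mp hr with hr | hr
          · linarith
          · left
            have e : a = b + c := by linarith
            subst e
            have : (b - c) ^ 2 = 0 := by linarith
            have := pow_eq_zero_iff (two_ne_zero) |>.mp this
            constructor <;> linarith
        · right; left
          have e : b = a + c := by linarith
          subst e
          have : (c - a) ^ 2 = 0 := by linarith
          have := pow_eq_zero_iff (two_ne_zero) |>.mp this
          constructor <;> linarith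
      · right; right
        have e : c = a + b := by linarith
        subst e
        have : (a - b) ^ 2 = 0 := by linarith
        have := pow_eq_zero_iff (two_ne_zero) |>.mp this
        constructor <;> linarith
    · left
      rw [hT2] at h0
      have e1 : (a - b) ^ 2 = 0 := by
        nlinarith [sq_nonneg (a - b), sq_nonneg (b - c), sq_nonneg (c - a)]
      have e2 : (b - c) ^ 2 = 0 := by
        nlinarith [sq_nonneg (a - b), sq_nonneg (b - c), sq_nonneg (c - a)]
      have e1 := pow_eq_zero_iff (two_ne_zero) |>.mp e1
      have e2 := pow_eq_zero_iff (two_ne_zero) |>.mp e2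
      constructor <;> linarith
  · have deg : (a + b + c) * (-a + b + c) * (a - b + c) * (a + b - c) = 0 → S = 0 := by
      intro h0
      rw [h0] at heron
      exact pow_eq_zero_iff (two_ne_zero) |>.mp (by linarith : S ^ 2 = 0)
    rintro (⟨h1, h2⟩ | ⟨h1, h2⟩ | ⟨h1, h2⟩ | ⟨h1, h2⟩)
    · subst h1 h2
      have e : 4 * S = Real.sqrt 3 * a ^ 2 := by
        apply (pow_left_inj₀ (by positivity) (by positivity) (two_ne_zero)).mp
        rw [mul_pow, mul_pow, h3]
        linarith
      linear_combination (-Real.sqrt 3) * e - a ^ 2 * h3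
    · have e : a = 2 * c := by linarith
      have e2 : b = c := h1
      rw [deg (by rw [e, e2]; ring), e, e2]; ring
    · have e : b = 2 * a := by linarith
      have e2 : c = a := h1
      rw [deg (by rw [e, e2]; ring), e, e2]; ring
    · have e : c = 2 * b := by linarith
      have e2 : a = b := h1
      rw [deg (by rw [e, e2]; ring), e, e2]; ring
end

section
/- For a degenerate triangle with sides a = b + c (b, c ≥ 0 not both zero), the ratio X = Q/(a+b+c)² satisfies 1/8 ≤ X ≤ 1/2, with X = 1/8 if and only if b = c and X = 1/2 if and only if b = 0 or c = 0; moreover, every value t ∈ [1/8, 1/2] is attained as X for some choice of b, c ≥ 0 not both zero with a = b + c. Consequently, the intersection of the Blaschke–Santaló diagram with the line Y = 0 is exactly the segment [1/8, 1/2] × {0}. -/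
/-- For a degenerate triangle with sides `a = b + c` (`b, c ≥ 0` not both zero),
the ratio `X = Q/(a+b+c)²` satisfies `1/8 ≤ X ≤ 1/2`, with `X = 1/8 ↔ b = c`
and `X = 1/2 ↔ b = 0 ∨ c = 0`; moreover every value `t ∈ [1/8, 1/2]` is attained.
Hence the intersection of the Blaschke–Santaló diagram with `Y = 0` is exactly
the segment `[1/8, 1/2] × {0}`. -/
theorem degenerate_slice (a b c Q : ℝ)
    (hb : 0 ≤ b) (hc : 0 ≤ c) (hbc : ¬ (b = 0 ∧ c = 0))
    (hdeg : a = b + c)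
    (hQ : Q = (a - b) ^ 2 + (b - c) ^ 2 + (c - a) ^ 2) :
    (1 / 8 ≤ Q / (a + b + c) ^ 2 ∧ Q / (a + b + c) ^ 2 ≤ 1 / 2) ∧
      (Q / (a + b + c) ^ 2 = 1 / 8 ↔ b = c) ∧
      (Q / (a + b + c) ^ 2 = 1 / 2 ↔ b = 0 ∨ c = 0) ∧
      (∀ t : ℝ, 1 / 8 ≤ t → t ≤ 1 / 2 →
        ∃ b' c' : ℝ, 0 ≤ b' ∧ 0 ≤ c' ∧ ¬ (b' = 0 ∧ c' = 0) ∧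
          (((b' + c') - b') ^ 2 + (b' - c') ^ 2 + (c' - (b' + c')) ^ 2) /
            ((b' + c') + b' + c') ^ 2 = t) := by
  subst hdeg
  have hs : 0 < b + c := by
    rcases hb.lt_or_eq with h | h
    · linarith
    · rcases hc.lt_or_eq with h' | h'
      · linarith
      · exact absurd ⟨h.symm, h'.symm⟩ hbc
  have hd : 0 < (b + c + b + c) ^ 2 := by
    have : 0 < b + c + b + c := by linarith
    positivity
  have hbc0 : 0 ≤ b * c := mul_nonneg hb hc
  refine ⟨⟨?_, ?_⟩, ?_, ?_, ?_⟩
  · rw [le_div_iff₀ hd, hQ]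
    nlinarith [sq_nonneg (b - c)]
  · rw [div_le_iff₀ hd, hQ]
    nlinarith
  · rw [div_eq_iff hd.ne', hQ]
    constructor
    · intro h
      have h2 : (b - c) ^ 2 = 0 := by nlinarith
      exact sub_eq_zero.mp (pow_eq_zero_iff two_ne_zero |>.mp h2)
    · rintro rfl
      ring
  · rw [div_eq_iff hd.ne', hQ]
    constructor
    · intro h
      exact mul_eq_zero.mp (by nlinarith)
    · rintro (rfl | rfl) <;> ring
  · intro t h1 h2
    have hnn : 0 ≤ (8 * t - 1) / 3 := by linarith
    have hsq := Real.sq_sqrt hnn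
    have h0 := Real.sqrt_nonneg ((8 * t - 1) / 3)
    have hle : √((8 * t - 1) / 3) ≤ 1 := by
      apply Real.sqrt_le_iff.mpr; constructor <;>
      linarith
    generalize √((8 * t - 1) / 3) = s at hsq h0 hle
    refine ⟨(1 + s) / 2, (1 - s) / 2, by linarith, by linarith, ?_, ?_⟩
    · rintro ⟨h, -⟩
      linarith
    · have : (1 + s) / 2 + (1 - s) / 2 + (1 + s) / 2 + (1 - s) / 2 = 2 := by ring
      rw [this]
      linarith
end

section
/- For any (possibly degenerate) triangle with side lengths a, b, c, area S and isoperimetric deficit Q, the sharp upper bound holds: 432·S² ≤ (a+b+c)⁴ − 6Q(a+b+c)² + 4√2·Q^{3/2}·(a+b+c). -/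
/-- Sharp upper bound for the area of a (possibly degenerate) triangle in terms
of the perimeter and the isoperimetric deficit `Q`:
`432·S² ≤ (a+b+c)⁴ − 6Q(a+b+c)² + 4√2·Q^{3/2}·(a+b+c)`. -/
theorem sharp_upper_bound (a b c S Q : ℝ)
    (ha : 0 ≤ a) (hb : 0 ≤ b) (hc : 0 ≤ c)
    (hab : a ≤ b + c) (hbc : b ≤ c + a) (hca : c ≤ a + b)
    (hS : 0 ≤ S)
    (heron : 16 * S ^ 2 = (a + b + c) * (-a + b + c) * (a - b + c) * (a + b - c))
    (hQ : Q = (a - b) ^ 2 + (b - c) ^ 2 + (c - a) ^ 2) :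
    432 * S ^ 2 ≤ (a + b + c) ^ 4 - 6 * Q * (a + b + c) ^ 2 +
      4 * Real.sqrt 2 * Q ^ ((3 : ℝ) / 2) * (a + b + c) := by
  have hQ0 : 0 ≤ Q := by rw [hQ]; positivity
  have hT0 : 0 ≤ 4 * Real.sqrt 2 * Q ^ ((3 : ℝ) / 2) := by positivity
  have hT2 : (4 * Real.sqrt 2 * Q ^ ((3 : ℝ) / 2)) ^ 2 = 32 * Q ^ 3 := by
    have h1 : (Q ^ ((3 : ℝ) / 2)) ^ 2 = Q ^ 3 := by
      rw [← Real.rpow_natCast, ← Real.rpow_mul hQ0, ← Real.rpow_natCast]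
      norm_num
    have h2 : Real.sqrt 2 ^ 2 = 2 := Real.sq_sqrt (by norm_num)
    rw [mul_pow, mul_pow, h1, h2]
    ring
  generalize 4 * Real.sqrt 2 * Q ^ ((3 : ℝ) / 2) = T at *
  have hE : (2 * b + 2 * c - 4 * a) * (2 * c + 2 * a - 4 * b) * (2 * a + 2 * b - 4 * c) ≤ T := by
    refine abs_le_of_sq_le_sq' ?_ hT0 |>.2
    rw [hT2, hQ]
    have h : 0 ≤ 1728 * ((a - b) * (b - c) * (c - a)) ^ 2 := by positivity
    linear_combination h
  have hm := mul_le_mul_of_nonneg_right hE (show 0 ≤ a + b + c by positivity)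
  rw [hQ]
  linear_combination hm + 27 * heron
end

section
/- For any (possibly degenerate) triangle with side lengths a, b, c, area S and isoperimetric deficit Q satisfying Q ≤ (1/8)(a+b+c)², the sharp lower bound holds: 432·S² ≥ (a+b+c)⁴ − 6Q(a+b+c)² − 4√2·Q^{3/2}·(a+b+c). -/
/-- Sharp lower bound for the area of a (possibly degenerate) triangle in terms of
the perimeter and the isoperimetric deficit `Q`, valid when `Q ≤ (a+b+c)²/8`:
`432·S² ≥ (a+b+c)⁴ − 6Q(a+b+c)² − 4√2·Q^{3/2}·(a+b+c)`. -/
theorem sharp_lower_bound (a b c S Q : ℝ)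
    (ha : 0 ≤ a) (hb : 0 ≤ b) (hc : 0 ≤ c)
    (hab : a ≤ b + c) (hbc : b ≤ c + a) (hca : c ≤ a + b)
    (hS : 0 ≤ S)
    (heron : 16 * S ^ 2 = (a + b + c) * (-a + b + c) * (a - b + c) * (a + b - c))
    (hQ : Q = (a - b) ^ 2 + (b - c) ^ 2 + (c - a) ^ 2)
    (hQsmall : Q ≤ (1 / 8) * (a + b + c) ^ 2) :
    432 * S ^ 2 ≥ (a + b + c) ^ 4 - 6 * Q * (a + b + c) ^ 2 -
      4 * Real.sqrt 2 * Q ^ ((3 : ℝ) / 2) * (a + b + c) := by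
  have hQ0 : 0 ≤ Q := by rw [hQ]; positivity
  have hp : 0 ≤ a + b + c := by positivity
  set E : ℝ := 8 * ((b + c - 2 * a) * (c + a - 2 * b) * (a + b - 2 * c)) with hE
  set T : ℝ := 4 * Real.sqrt 2 * Q ^ ((3 : ℝ) / 2) with hT
  have hT0 : 0 ≤ T := by positivity
  have hQ3 : (Q ^ ((3 : ℝ) / 2)) ^ 2 = Q ^ 3 := by
    rw [← Real.rpow_natCast, ← Real.rpow_mul hQ0, ← Real.rpow_natCast]
    norm_num
  have hT2 : T ^ 2 = 32 * Q ^ 3 := by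
    rw [hT, mul_pow, mul_pow, hQ3, Real.sq_sqrt (by norm_num)]
    ring
  have hid : 32 * Q ^ 3 - E ^ 2 = 27 * 64 * ((a - b) * (b - c) * (c - a)) ^ 2 := by
    rw [hQ, hE]; ring
  have hET : -T ≤ E := by
    refine (abs_le.1 (abs_le_of_sq_le_sq ?_ hT0)).1
    nlinarith [sq_nonneg ((a - b) * (b - c) * (c - a))]
  have key : 432 * S ^ 2 = (a + b + c) ^ 4 - 6 * Q * (a + b + c) ^ 2 + E * (a + b + c) := by
    have : 432 * S ^ 2 = 27 * (16 * S ^ 2) := by ring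
    rw [this, heron, hQ, hE]; ring
  nlinarith [mul_le_mul_of_nonneg_right hET hp]
end

section
/- For every t ∈ [0, 1/2] there exists a (possibly degenerate) triangle with side lengths a, b, c (not all zero) such that Q/(a+b+c)² = t and 12√3·S/(a+b+c)² = √(1 − 6t + 4√2·t^{3/2}); that is, the upper boundary φ₊ of the Blaschke–Santaló diagram is attained for every admissible abscissa. -/
/-- The upper boundary `φ₊(t) = √(1 − 6t + 4√2·t^{3/2})` of the Blaschke–Santaló
diagram is attained: for every `t ∈ [0, 1/2]` there is a (possibly degenerate)
triangle with `Q/(a+b+c)² = t` and `12√3·S/(a+b+c)² = φ₊(t)`. -/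
theorem upper_boundary_attained (t : ℝ) (ht0 : 0 ≤ t) (ht1 : t ≤ 1 / 2) :
    ∃ a b c S : ℝ, 0 ≤ a ∧ 0 ≤ b ∧ 0 ≤ c ∧
      a ≤ b + c ∧ b ≤ c + a ∧ c ≤ a + b ∧
      ¬ (a = 0 ∧ b = 0 ∧ c = 0) ∧ 0 ≤ S ∧
      16 * S ^ 2 = (a + b + c) * (-a + b + c) * (a - b + c) * (a + b - c) ∧
      ((a - b) ^ 2 + (b - c) ^ 2 + (c - a) ^ 2) / (a + b + c) ^ 2 = t ∧
      12 * Real.sqrt 3 * S / (a + b + c) ^ 2 =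
        Real.sqrt (1 - 6 * t + 4 * Real.sqrt 2 * t ^ ((3 : ℝ) / 2)) := by
  obtain ⟨x, hx0, hx⟩ : ∃ x : ℝ, 0 ≤ x ∧ t = 2 * x ^ 2 :=
    ⟨Real.sqrt (t / 2), Real.sqrt_nonneg _, by rw [Real.sq_sqrt (by linarith)]; ring⟩
  have hx1 : x ≤ 1 / 2 := by nlinarith
  have h3 : Real.sqrt 3 ^ 2 = 3 := Real.sq_sqrt (by norm_num)
  have h2 : Real.sqrt 2 ^ 2 = 2 := Real.sq_sqrt (by norm_num)
  have hw : Real.sqrt (1 + 4 * x) ^ 2 = 1 + 4 * x := Real.sq_sqrt (by linarith)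
  have hpow : t ^ ((3 : ℝ) / 2) = 2 * Real.sqrt 2 * x ^ 3 := by
    have e : t = (Real.sqrt 2 * x) ^ (2 : ℝ) := by
      rw [Real.rpow_two, mul_pow, h2, hx]
    rw [e, ← Real.rpow_mul (by positivity)]
    rw [show (2 : ℝ) * (3 / 2) = ((3 : ℕ) : ℝ) by norm_num, Real.rpow_natCast]
    linear_combination Real.sqrt 2 * x ^ 3 * h2
  refine ⟨1 + x, 1 + x, 1 - 2 * x, Real.sqrt 3 / 4 * (1 - 2 * x) * Real.sqrt (1 + 4 * x),
    by linarith, by linarith, by linarith, by linarith, by linarith, by linarith, ?_, ?_, ?_, ?_, ?_⟩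
  · rintro ⟨h, -, -⟩
    linarith
  · have : 0 ≤ 1 - 2 * x := by linarith
    positivity
  · linear_combination (1 - 2 * x) ^ 2 * Real.sqrt (1 + 4 * x) ^ 2 * h3 + 3 * (1 - 2 * x) ^ 2 * hw
  · rw [show 1 + x + (1 + x) + (1 - 2 * x) = 3 by ring, hx]
    ring
  · rw [hpow, show 1 + x + (1 + x) + (1 - 2 * x) = 3 by ring]
    have e : 1 - 6 * t + 4 * Real.sqrt 2 * (2 * Real.sqrt 2 * x ^ 3)
        = ((1 - 2 * x) * Real.sqrt (1 + 4 * x)) ^ 2 := by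
      rw [hx]
      linear_combination 8 * x ^ 3 * h2 - (1 - 2 * x) ^ 2 * hw
    rw [e, Real.sqrt_sq (mul_nonneg (by linarith) (Real.sqrt_nonneg _))]
    linear_combination (1 - 2 * x) * Real.sqrt (1 + 4 * x) / 3 * h3
end

section
/- For every t ∈ [0, 1/8] there exists a (possibly degenerate) triangle with side lengths a, b, c (not all zero) such that Q/(a+b+c)² = t and 12√3·S/(a+b+c)² = √(1 − 6t − 4√2·t^{3/2}); that is, the lower boundary φ₋ of the Blaschke–Santaló diagram is attained for every abscissa in [0, 1/8]. -/
/-- The lower boundary `φ₋(t) = √(1 − 6t − 4√2·t^{3/2})` of the Blaschke–Santaló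
diagram is attained: for every `t ∈ [0, 1/8]` there is a (possibly degenerate)
triangle with `Q/(a+b+c)² = t` and `12√3·S/(a+b+c)² = φ₋(t)`. -/
theorem lower_boundary_attained (t : ℝ) (ht0 : 0 ≤ t) (ht1 : t ≤ 1 / 8) :
    ∃ a b c S : ℝ, 0 ≤ a ∧ 0 ≤ b ∧ 0 ≤ c ∧
      a ≤ b + c ∧ b ≤ c + a ∧ c ≤ a + b ∧
      ¬ (a = 0 ∧ b = 0 ∧ c = 0) ∧ 0 ≤ S ∧
      16 * S ^ 2 = (a + b + c) * (-a + b + c) * (a - b + c) * (a + b - c) ∧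
      ((a - b) ^ 2 + (b - c) ^ 2 + (c - a) ^ 2) / (a + b + c) ^ 2 = t ∧
      12 * Real.sqrt 3 * S / (a + b + c) ^ 2 =
        Real.sqrt (1 - 6 * t - 4 * Real.sqrt 2 * t ^ ((3 : ℝ) / 2)) := by
  obtain ⟨u, hu0, hu⟩ : ∃ u : ℝ, 0 ≤ u ∧ t = 2 * u ^ 2 :=
    ⟨Real.sqrt (t / 2), Real.sqrt_nonneg _, by rw [Real.sq_sqrt (by linarith)]; ring⟩
  have hu1 : u ≤ 1 / 4 := by nlinarith
  have h3 : Real.sqrt 3 ^ 2 = 3 := Real.sq_sqrt (by norm_num)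
  have h2 : Real.sqrt 2 ^ 2 = 2 := Real.sq_sqrt (by norm_num)
  have hr : Real.sqrt (1 - 4 * u) ^ 2 = 1 - 4 * u := Real.sq_sqrt (by linarith)
  have hr0 := Real.sqrt_nonneg (1 - 4 * u)
  have h30 := Real.sqrt_nonneg 3
  have hst : t = (Real.sqrt 2 * u) ^ 2 := by rw [mul_pow, h2, hu]
  have hsu : 0 ≤ Real.sqrt 2 * u := by positivity
  have hp : t ^ ((3 : ℝ) / 2) = (Real.sqrt 2 * u) ^ 3 := by
    rw [hst, ← Real.rpow_natCast _ 2, ← Real.rpow_mul hsu, ← Real.rpow_natCast _ 3]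
    norm_num
  have hsum : (1 - u) + (1 - u) + (1 + 2 * u) = 3 := by ring
  refine ⟨1 - u, 1 - u, 1 + 2 * u, Real.sqrt 3 / 4 * (1 + 2 * u) * Real.sqrt (1 - 4 * u),
    by linarith, by linarith, by linarith, by linarith, by linarith, by linarith, ?_,
    by positivity, ?_, ?_, ?_⟩
  · rintro ⟨h, -, -⟩
    linarith
  · rw [mul_pow, mul_pow, div_pow, h3, hr]
    ring
  · rw [hsum, hu]
    ring
  · rw [hsum, hp]
    have e1 : 12 * Real.sqrt 3 * (Real.sqrt 3 / 4 * (1 + 2 * u) * Real.sqrt (1 - 4 * u)) / 3 ^ 2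
        = (1 + 2 * u) * Real.sqrt (1 - 4 * u) := by
      linear_combination ((1 + 2 * u) * Real.sqrt (1 - 4 * u) / 3) * h3
    have e2 : 1 - 6 * t - 4 * Real.sqrt 2 * (Real.sqrt 2 * u) ^ 3
        = ((1 + 2 * u) * Real.sqrt (1 - 4 * u)) ^ 2 := by
      rw [mul_pow _ (Real.sqrt (1 - 4 * u)), hr, hu]
      linear_combination (-4 * u ^ 3 * (Real.sqrt 2 ^ 2 + 2)) * h2
    rw [e1, e2, Real.sqrt_sq (by positivity)]
end

section
/- For every t ∈ [0, 1/8] and every s with φ₋(t) ≤ s ≤ φ₊(t), there exists a (possibly degenerate) triangle with side lengths a, b, c (not all zero) such that Q/(a+b+c)² = t and 12√3·S/(a+b+c)² = s; i.e. the vertical slice of the Blaschke–Santaló diagram at abscissa t ∈ [0, 1/8] is exactly the interval [φ₋(t), φ₊(t)]. -/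
/-- For `t ∈ [0, 1/8]`, the vertical slice of the Blaschke–Santaló diagram at
abscissa `t` fills the interval `[φ₋(t), φ₊(t)]`: for every `s` with
`φ₋(t) ≤ s ≤ φ₊(t)` there exists a (possibly degenerate) triangle with
`Q/(a+b+c)² = t` and `12√3·S/(a+b+c)² = s`. -/
theorem vertical_slice_small_X (t s : ℝ) (ht0 : 0 ≤ t) (ht1 : t ≤ 1 / 8)
    (hs1 : Real.sqrt (1 - 6 * t - 4 * Real.sqrt 2 * t ^ ((3 : ℝ) / 2)) ≤ s)
    (hs2 : s ≤ Real.sqrt (1 - 6 * t + 4 * Real.sqrt 2 * t ^ ((3 : ℝ) / 2))) :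
    ∃ a b c S : ℝ, 0 ≤ a ∧ 0 ≤ b ∧ 0 ≤ c ∧
      a ≤ b + c ∧ b ≤ c + a ∧ c ≤ a + b ∧
      ¬ (a = 0 ∧ b = 0 ∧ c = 0) ∧ 0 ≤ S ∧
      16 * S ^ 2 = (a + b + c) * (-a + b + c) * (a - b + c) * (a + b - c) ∧
      ((a - b) ^ 2 + (b - c) ^ 2 + (c - a) ^ 2) / (a + b + c) ^ 2 = t ∧
      12 * Real.sqrt 3 * S / (a + b + c) ^ 2 = s := by
  have h2 : Real.sqrt 2 ^ 2 = 2 := Real.sq_sqrt (by norm_num)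
  have h3 : Real.sqrt 3 ^ 2 = 3 := Real.sq_sqrt (by norm_num)
  have hp3 : 0 < Real.sqrt 3 := Real.sqrt_pos.mpr (by norm_num)
  have htt : Real.sqrt t ^ 2 = t := Real.sq_sqrt ht0
  have hpow : t ^ ((3 : ℝ) / 2) = t * Real.sqrt t := by
    rw [show (3 : ℝ) / 2 = 1 + 1 / 2 by norm_num,
      Real.rpow_add_of_nonneg ht0 (by norm_num) (by norm_num), Real.rpow_one,
      Real.sqrt_eq_rpow]
  obtain ⟨r, hr⟩ : ∃ r, r = 2 * Real.sqrt 2 * Real.sqrt t := ⟨_, rfl⟩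
  have hr0 : 0 ≤ r := by rw [hr]; positivity
  have hr2 : r ^ 2 = 8 * t := by
    rw [hr, mul_pow, mul_pow, h2, htt]; ring
  have hr1 : r ≤ 1 := by nlinarith
  have hr3 : 4 * Real.sqrt 2 * t ^ ((3 : ℝ) / 2) = r ^ 3 / 4 := by
    rw [hpow, pow_succ, hr2, hr]; ring
  rw [hr3] at hs1 hs2
  obtain ⟨hs0, hlo⟩ := Real.sqrt_le_iff.mp hs1
  have hr30 : 0 ≤ r ^ 3 := by positivity
  have hhi : s ^ 2 ≤ 1 - 6 * t + r ^ 3 / 4 := by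
    have hn : 0 ≤ 1 - 6 * t + r ^ 3 / 4 := by linarith
    have := pow_le_pow_left₀ hs0 hs2 2
    rwa [Real.sq_sqrt hn] at this
  obtain ⟨k, hk1, hk2, hk⟩ : ∃ k : ℝ, -1 ≤ k ∧ k ≤ 1 ∧ s ^ 2 - 1 + 6 * t = r ^ 3 / 4 * k := by
    rcases hr0.eq_or_lt with h | h
    · refine ⟨0, by norm_num, by norm_num, ?_⟩
      rw [← h] at hlo hhi
      norm_num at hlo hhi ⊢
      linarith
    · have hp : 0 < r ^ 3 / 4 := by positivity
      refine ⟨(s ^ 2 - 1 + 6 * t) / (r ^ 3 / 4), ?_, ?_, ?_⟩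
      · rw [le_div_iff₀ hp]; linarith
      · rw [div_le_iff₀ hp]; linarith
      · field_simp
  obtain ⟨c, σ, hcs, hc3⟩ : ∃ c σ : ℝ, σ ^ 2 + c ^ 2 = 1 ∧ 4 * c ^ 3 - 3 * c = k := by
    refine ⟨Real.cos (Real.arccos k / 3), Real.sin (Real.arccos k / 3),
      Real.sin_sq_add_cos_sq _, ?_⟩
    rw [← Real.cos_three_mul, mul_div_cancel₀ _ (by norm_num : (3 : ℝ) ≠ 0),
      Real.cos_arccos hk1 hk2]
  obtain ⟨u, hu⟩ : ∃ u, u = r * c := ⟨_, rfl⟩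
  obtain ⟨d, hd⟩ : ∃ d, d = Real.sqrt 3 * (r * σ) := ⟨_, rfl⟩
  have hud : 3 * u ^ 2 + d ^ 2 = 24 * t := by
    rw [hu, hd, mul_pow (Real.sqrt 3), h3]
    linear_combination 3 * r ^ 2 * hcs + 3 * hr2
  have hbound : ∀ x : ℝ, x ^ 2 ≤ 8 * t → -1 ≤ x ∧ x ≤ 1 := by
    intro x hx
    constructor <;> nlinarith
  have b1 := hbound u (by nlinarith [sq_nonneg d])
  have b2 := hbound (-(u + d) / 2) (by nlinarith [sq_nonneg (3 * u - d)])
  have b3 := hbound (-(u - d) / 2) (by nlinarith [sq_nonneg (3 * u + d)])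
  have hprod : u * (u ^ 2 - d ^ 2) / 4 = r ^ 3 / 4 * k := by
    rw [← hc3]
    have : d ^ 2 = 3 * (r * σ) ^ 2 := by rw [hd, mul_pow, h3]
    rw [this, hu]
    linear_combination (-3 / 4 * r ^ 3 * c) * hcs
  have hS : 12 * Real.sqrt 3 * (Real.sqrt 3 * s / 4) = 9 * s := by
    linear_combination 3 * s * h3
  refine ⟨1 - u / 2, 1 + (u + d) / 4, 1 + (u - d) / 4, Real.sqrt 3 * s / 4,
    by linarith, by linarith, by linarith, by linarith, by linarith, by linarith,
    ?_, by positivity, ?_, ?_, ?_⟩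
  · rintro ⟨ha, hb, hc⟩; linarith
  · have : 16 * (Real.sqrt 3 * s / 4) ^ 2 = 3 * s ^ 2 := by
      linear_combination s ^ 2 * h3
    rw [this]
    linear_combination 3 * hk - 3 * hprod + 3 / 4 * hud
  · rw [show 1 - u / 2 + (1 + (u + d) / 4) + (1 + (u - d) / 4) = 3 by ring]
    linear_combination hud / 24
  · rw [show 1 - u / 2 + (1 + (u + d) / 4) + (1 + (u - d) / 4) = 3 by ring, hS]
    ring
end

section
/- For every t ∈ [1/8, 1/2] and every s with 0 ≤ s ≤ φ₊(t), there exists a (possibly degenerate) triangle with side lengths a, b, c (not all zero) such that Q/(a+b+c)² = t and 12√3·S/(a+b+c)² = s; i.e. the vertical slice of the Blaschke–Santaló diagram at abscissa t ∈ [1/8, 1/2] is exactly the interval [0, φ₊(t)]. -/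
/-- For `t ∈ [1/8, 1/2]`, the vertical slice of the Blaschke–Santaló diagram at
abscissa `t` fills the interval `[0, φ₊(t)]`: for every `s` with
`0 ≤ s ≤ φ₊(t)` there exists a (possibly degenerate) triangle with
`Q/(a+b+c)² = t` and `12√3·S/(a+b+c)² = s`. -/
theorem vertical_slice_large_X (t s : ℝ) (ht0 : 1 / 8 ≤ t) (ht1 : t ≤ 1 / 2)
    (hs1 : 0 ≤ s)
    (hs2 : s ≤ Real.sqrt (1 - 6 * t + 4 * Real.sqrt 2 * t ^ ((3 : ℝ) / 2))) :
    ∃ a b c S : ℝ, 0 ≤ a ∧ 0 ≤ b ∧ 0 ≤ c ∧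
      a ≤ b + c ∧ b ≤ c + a ∧ c ≤ a + b ∧
      ¬ (a = 0 ∧ b = 0 ∧ c = 0) ∧ 0 ≤ S ∧
      16 * S ^ 2 = (a + b + c) * (-a + b + c) * (a - b + c) * (a + b - c) ∧
      ((a - b) ^ 2 + (b - c) ^ 2 + (c - a) ^ 2) / (a + b + c) ^ 2 = t ∧
      12 * Real.sqrt 3 * S / (a + b + c) ^ 2 = s := by
  obtain ⟨k, hk⟩ : ∃ k, k = Real.sqrt (2 * t) := ⟨_, rfl⟩
  have hk0 : 0 ≤ k := hk ▸ Real.sqrt_nonneg _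
  have hk2 : k ^ 2 = 2 * t := by rw [hk]; exact Real.sq_sqrt (by linarith)
  have hkl : 1 / 2 ≤ k := by nlinarith
  have hku : k ≤ 1 := by nlinarith
  have hpow : 4 * Real.sqrt 2 * t ^ ((3 : ℝ) / 2) = 2 * k ^ 3 := by
    have h1 : t ^ ((3 : ℝ) / 2) = t * Real.sqrt t := by
      rw [show (3 : ℝ) / 2 = 1 + 1 / 2 by norm_num, Real.rpow_add (by linarith),
        Real.rpow_one, Real.sqrt_eq_rpow]
    have h2 : k = Real.sqrt 2 * Real.sqrt t := by
      rw [hk, Real.sqrt_mul (by norm_num)]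
    rw [h1, show k ^ 3 = k ^ 2 * k by ring, hk2, h2]
    ring
  have hs3 : s ^ 2 ≤ (1 + 2 * k) * (1 - k) ^ 2 := by
    rw [hpow, show 1 - 6 * t + 2 * k ^ 3 = (1 + 2 * k) * (1 - k) ^ 2 by
      linear_combination (3 : ℝ) * hk2] at hs2
    have hn : 0 ≤ (1 + 2 * k) * (1 - k) ^ 2 := by positivity
    calc s ^ 2 ≤ (Real.sqrt ((1 + 2 * k) * (1 - k) ^ 2)) ^ 2 := by gcongr
      _ = _ := Real.sq_sqrt hn
  obtain ⟨r, hr⟩ : ∃ r, r = Real.sqrt ((4 * k ^ 2 - 1) / 3) := ⟨_, rfl⟩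
  have hr0 : 0 ≤ r := hr ▸ Real.sqrt_nonneg _
  have hr2 : r ^ 2 = (4 * k ^ 2 - 1) / 3 := by
    rw [hr]; exact Real.sq_sqrt (by nlinarith)
  have hrk : r ≤ (4 * k - 1) / 3 := by
    refine (sq_le_sq₀ (by assumption) (by linarith)).1 ?_
    nlinarith [sq_nonneg (k - 1)]
  have hx01 : (1 + r) / 2 ≤ (1 + 2 * k) / 3 := by linarith
  have hivt := intermediate_value_Icc hx01
    (f := fun x : ℝ => 27 * (x * ((1 - k ^ 2) / 3 - x + x ^ 2))) (by fun_prop)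
  have hmem : s ^ 2 ∈ Set.Icc
      (27 * ((1 + r) / 2 * ((1 - k ^ 2) / 3 - (1 + r) / 2 + ((1 + r) / 2) ^ 2)))
      (27 * ((1 + 2 * k) / 3 * ((1 - k ^ 2) / 3 - (1 + 2 * k) / 3 + ((1 + 2 * k) / 3) ^ 2))) := by
    constructor
    · have : (1 - k ^ 2) / 3 - (1 + r) / 2 + ((1 + r) / 2) ^ 2 = 0 := by
        linear_combination hr2 / 4
      rw [this]; simp; positivity
    · refine hs3.trans (le_of_eq ?_); ring
  obtain ⟨x, ⟨hxl, hxu⟩, hx⟩ := hivt hmem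
  simp only at hx
  have hx1 : x ≤ 1 := by linarith
  have hm : 0 ≤ (1 - k ^ 2) / 3 - x + x ^ 2 := by
    have h := mul_nonneg (show 0 ≤ 2 * x - 1 - r by linarith) (show 0 ≤ 2 * x - 1 + r by linarith)
    linarith
  have hd : 0 ≤ (1 - x) ^ 2 - 4 * ((1 - k ^ 2) / 3 - x + x ^ 2) := by
    have h := mul_nonneg (show 0 ≤ 1 + 2 * k - 3 * x by linarith)
      (show 0 ≤ 3 * x - 1 + 2 * k by linarith)
    linarith
  obtain ⟨e, he⟩ : ∃ e, e = Real.sqrt ((1 - x) ^ 2 - 4 * ((1 - k ^ 2) / 3 - x + x ^ 2)) :=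
    ⟨_, rfl⟩
  have he0 : 0 ≤ e := he ▸ Real.sqrt_nonneg _
  have he2 : e ^ 2 = (1 - x) ^ 2 - 4 * ((1 - k ^ 2) / 3 - x + x ^ 2) := by
    rw [he]; exact Real.sq_sqrt hd
  have hex : e ≤ 1 - x := by
    refine (sq_le_sq₀ (by assumption) (by linarith)).1 ?_
    linarith
  have h3 : Real.sqrt 3 ^ 2 = 3 := Real.sq_sqrt (by norm_num)
  have h3p : 0 < Real.sqrt 3 := by positivity
  have hsum : (1 - x) / 2 + (1 + x - e) / 4 + (1 + x + e) / 4 = 1 := by ring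
  refine ⟨(1 - x) / 2, (1 + x - e) / 4, (1 + x + e) / 4, s / (12 * Real.sqrt 3),
    by linarith, by linarith, by linarith, by linarith, by linarith, by linarith, ?_,
    by positivity, ?_, ?_, ?_⟩
  · rintro ⟨h1, h2, h4⟩
    linarith
  · rw [hsum, div_pow, mul_pow, h3]
    linear_combination (-1 / 27 : ℝ) * hx + x / 4 * he2
  · rw [hsum]
    linear_combination (3 / 8 : ℝ) * he2 + hk2 / 2
  · rw [hsum]
    field_simp
end

section
/- For any (possibly degenerate) triangle with a + b + c > 0, setting X := Q/(a+b+c)² and Y := 12√3·S/(a+b+c)², one has Y ≤ φ₊(X) = √(1 − 6X + 4√2·X^{3/2}); moreover, if X ≤ 1/8 then additionally Y ≥ φ₋(X) = √(1 − 6X − 4√2·X^{3/2}). -/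
/-- For any (possibly degenerate) triangle with `a + b + c > 0`, setting
`X = Q/(a+b+c)²` and `Y = 12√3·S/(a+b+c)²`, one has `Y ≤ φ₊(X)`; moreover if
`X ≤ 1/8` then additionally `Y ≥ φ₋(X)`. -/
theorem diagram_bounds (a b c S Q X Y : ℝ)
    (ha : 0 ≤ a) (hb : 0 ≤ b) (hc : 0 ≤ c)
    (hab : a ≤ b + c) (hbc : b ≤ c + a) (hca : c ≤ a + b)
    (hpos : 0 < a + b + c) (hS : 0 ≤ S)
    (heron : 16 * S ^ 2 = (a + b + c) * (-a + b + c) * (a - b + c) * (a + b - c))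
    (hQ : Q = (a - b) ^ 2 + (b - c) ^ 2 + (c - a) ^ 2)
    (hX : X = Q / (a + b + c) ^ 2)
    (hY : Y = 12 * Real.sqrt 3 * S / (a + b + c) ^ 2) :
    Y ≤ Real.sqrt (1 - 6 * X + 4 * Real.sqrt 2 * X ^ ((3 : ℝ) / 2)) ∧
      (X ≤ 1 / 8 →
        Real.sqrt (1 - 6 * X - 4 * Real.sqrt 2 * X ^ ((3 : ℝ) / 2)) ≤ Y) := by
  have hp : a + b + c ≠ 0 := hpos.ne'
  have h2 : Real.sqrt 2 ^ 2 = 2 := Real.sq_sqrt (by norm_num)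
  have h3 : Real.sqrt 3 ^ 2 = 3 := Real.sq_sqrt (by norm_num)
  have hX0 : 0 ≤ X := by rw [hX, hQ]; positivity
  have hY0 : 0 ≤ Y := by rw [hY]; positivity
  have hR : (X ^ ((3 : ℝ) / 2)) ^ 2 = X ^ 3 := by
    rw [← Real.rpow_natCast, ← Real.rpow_mul hX0, ← Real.rpow_natCast]
    norm_num
  have hT0 : 0 ≤ 4 * Real.sqrt 2 * X ^ ((3 : ℝ) / 2) := by positivity
  have hT : (4 * Real.sqrt 2 * X ^ ((3 : ℝ) / 2)) ^ 2 = 32 * X ^ 3 := by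
    rw [mul_pow, mul_pow, h2, hR]; ring
  obtain ⟨x, hx⟩ : ∃ x, x = a / (a + b + c) := ⟨_, rfl⟩
  obtain ⟨y, hy⟩ : ∃ y, y = b / (a + b + c) := ⟨_, rfl⟩
  obtain ⟨z, hz⟩ : ∃ z, z = c / (a + b + c) := ⟨_, rfl⟩
  have hz' : z = 1 - x - y := by rw [hx, hy, hz]; field_simp; ring
  have hXx : X = (x - y) ^ 2 + (y - z) ^ 2 + (z - x) ^ 2 := by
    rw [hX, hQ, hx, hy, hz]; field_simp
  have hYx : Y ^ 2 = 27 * (1 - 2 * x) * (1 - 2 * y) * (1 - 2 * z) := by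
    have e : Y ^ 2 = 27 * (16 * S ^ 2) / (a + b + c) ^ 4 := by
      rw [hY, div_pow, mul_pow, mul_pow, h3]; ring
    rw [e, heron, hx, hy, hz]; field_simp; ring
  have key : 32 * X ^ 3 - (Y ^ 2 - 1 + 6 * X) ^ 2
      = 1728 * ((x - y) * (y - z) * (z - x)) ^ 2 := by
    rw [hYx, hXx, hz']; ring
  have hD : |Y ^ 2 - 1 + 6 * X| ≤ 4 * Real.sqrt 2 * X ^ ((3 : ℝ) / 2) := by
    apply abs_le_of_sq_le_sq _ hT0
    rw [hT]
    have := sq_nonneg ((x - y) * (y - z) * (z - x))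
    linarith
  obtain ⟨hl, hu⟩ := abs_le.mp hD
  refine ⟨Real.le_sqrt_of_sq_le (by linarith), fun _ => ?_⟩
  exact Real.sqrt_le_iff.mpr ⟨hY0, by linarith⟩
end

section
/- Fix X ∈ [0, 1/8] and z ∈ ℝ. There exist x, y ≥ 0 with x + y + z = 1 and (x−y)² + (y−z)² + (z−x)² = 4X if and only if z ∈ [(1 − 2√(2X))/3, (1 + 2√(2X))/3]. -/
/-- For `X ∈ [0, 1/8]` and `z ∈ ℝ`, there exist `x, y ≥ 0` with `x + y + z = 1`
and `(x−y)² + (y−z)² + (z−x)² = 4X` if and only if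
`z ∈ [(1 − 2√(2X))/3, (1 + 2√(2X))/3]`. -/
theorem admissible_z_small_X (X z : ℝ) (hX0 : 0 ≤ X) (hX1 : X ≤ 1 / 8) :
    (∃ x y : ℝ, 0 ≤ x ∧ 0 ≤ y ∧ x + y + z = 1 ∧
        (x - y) ^ 2 + (y - z) ^ 2 + (z - x) ^ 2 = 4 * X) ↔
      (1 - 2 * Real.sqrt (2 * X)) / 3 ≤ z ∧ z ≤ (1 + 2 * Real.sqrt (2 * X)) / 3 := by
  have hs := Real.sq_sqrt (show 0 ≤ 2 * X by linarith)
  have hs0 := Real.sqrt_nonneg (2 * X)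
  set r := Real.sqrt (2 * X) with hr
  constructor
  · rintro ⟨x, y, hx, hy, h1, h2⟩
    have hz : z = 1 - x - y := by linarith
    have h3 : (3 * z - 1) ^ 2 ≤ (2 * r) ^ 2 := by
      have : (3 * z - 1) ^ 2 + 3 * (x - y) ^ 2 = 8 * X := by
        subst hz
        linear_combination 2 * h2
      nlinarith [sq_nonneg (x - y)]
    have h4 := abs_le_of_sq_le_sq' h3 (by linarith)
    constructor <;> linarith [h4.1, h4.2]
  · rintro ⟨h1, h2⟩
    have h3 : (3 * z - 1) ^ 2 ≤ (2 * r) ^ 2 := by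
      apply sq_le_sq' <;> linarith
    have h4 : 0 ≤ (8 * X - (3 * z - 1) ^ 2) / 3 := by nlinarith
    have hd := Real.sq_sqrt h4
    have hd0 := Real.sqrt_nonneg ((8 * X - (3 * z - 1) ^ 2) / 3)
    set d := Real.sqrt ((8 * X - (3 * z - 1) ^ 2) / 3) with hdd
    have hr1 : r ≤ 1 / 2 := by nlinarith
    have hds : d ≤ 1 - z := by
      refine (abs_le_of_sq_le_sq' ?_ (by linarith)).2
      nlinarith [sq_nonneg (2 * z - 1)]
    refine ⟨(1 - z + d) / 2, (1 - z - d) / 2, by linarith, by linarith, by ring, ?_⟩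
    linear_combination (3 / 2) * hd
end
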